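/- arXiv:2303.03390 — 3 statements merged into one kernel-verified Lean document; each statement's English description precedes it below -/
import Mathlib

section
/- In the MLFP setting with A finite, assume there are c, L ∈ [0,∞), a measurable weight function ω : 𝕏 → (0,∞), and a 𝒳/𝒜-measurable v : 𝕏 → ℝ^A such that for all (x,a) ∈ 𝕏 × A and r,s ∈ ℝ^A it holds that |f(x,r) − f(x,s)| ≤ L max_{b∈A}|r(b) − s(b)|, (E[|f(X^{0,x,a},0)|² + ‖v(X^{0,x,a})‖_∞² + |ω(X^{0,x,a})|²])^{1/2} ≤ c ω(x), and v(x)(a) = E[f(X^{0,x,a}, v(X^{0,x,a}))]. Then for all n ∈ ℕ, (x,a) ∈ 𝕏 × A, and θ ∈ Θ it holds that (Var[V_n^θ(x)(a)])^{1/2} ≤ M^{−n/2} (E[|f(X^{0,x,a},0)|²])^{1/2} + 1_{[2,∞)}(n) L M^{−1/2} (E[‖V_{n−1}^0(X^{0,x,a}) − v(X^{0,x,a})‖_∞²])^{1/2} + 1_{[2,∞)}(n) L M^{1/2} M^{−n/2} (E[‖v(X^{0,x,a})‖_∞²])^{1/2} + Σ_{l=1}^{n−2} L(1 + M^{1/2})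 M^{−(n−l)/2} (E[‖V_l^0(X^{0,x,a}) − v(X^{0,x,a})‖_∞²])^{1/2}. -/
open MeasureTheory

/-!
The summands of `V_n^θ(x)(a)` at different pairs `(l, i)` use noise from disjoint parts of the index
tree (`block`), so they are independent and the variance of the sum is at most the sum of the second
moments, weighted by `M^{-2(n-l)}` (`evariance_sum_le`; stated in `[0, ∞]` so that integrability
plays no role). Level `l` has `M^{n-l}` summands, which leaves `M^{-(n-l)}` times the second moment
of one of them. For `l = 0` a summand is `f(X, 0)` because `V_0 = 0`. For `l ≥ 1` the Lipschitz
condition and Minkowski's inequality bound its root mean square by `L (e_l + e_{l-1})`, where `e_l`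
is the root mean square of `‖V_l^0(X^{0,x,a}) - v(X^{0,x,a})‖_∞`. Taking square roots and collecting
the coefficient of each `e_l` gives the claim.

The point that needs care is that the error of `V_l^η` at `X^{θ,x,a}` may be replaced by that of
`V_l^0` at `X^{0,x,a}` (`lintegral_eval`). This requires that the law of `V_l^θ` does not depend on
`θ` (`law_V`), which is proved by induction for the whole field, as a random element of the space of
functions `𝕏 × A → ℝ` with the product σ-algebra. Evaluating a field at a random point is not
measurable for that σ-algebra, so laws cannot be pushed forward directly. Instead the sampled points,
being independent of the approximations, are frozen by Fubini's theorem (`lintegral_freeze`): at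
frozen points the summand is a measurable function of the approximating fields, and joint
measurability in the points and `ω` is known from the recursion.
-/

open ProbabilityTheory

namespace MLFP

/-- For independent `X` and `φ`, the expectation of `h (X, φ)` may be computed by freezing `X`
and integrating over an independent copy first. -/
lemma lintegral_indep {Ω α β : Type*} [MeasurableSpace Ω] [MeasurableSpace α]
    [MeasurableSpace β] {μ : Measure Ω} [IsProbabilityMeasure μ] {X : Ω → α} {φ : Ω → β}
    (hX : Measurable X) (hφ : Measurable φ) (hind : IndepFun X φ μ)
    {h : α × β → ENNReal} (hh : Measurable h) :
    ∫⁻ ω, h (X ω, φ ω) ∂μ = ∫⁻ ω', ∫⁻ ω, h (X ω', φ ω) ∂μ ∂μ := by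
  have hmap := (indepFun_iff_map_prod_eq_prod_map_map hX.aemeasurable hφ.aemeasurable).1 hind
  have : IsProbabilityMeasure (μ.map φ) := Measure.isProbabilityMeasure_map hφ.aemeasurable
  rw [← lintegral_map (f := h) (g := fun ω => (X ω, φ ω)) hh (hX.prodMk hφ), hmap,
    lintegral_prod _ hh.aemeasurable, lintegral_map hh.lintegral_prod_right' hX]
  refine lintegral_congr fun ω' => ?_
  exact lintegral_map (hh.comp measurable_prodMk_left) hφ

/-- The preceding lemma with the second random variable replaced by the identity into a coarser
σ-algebra. This is what allows `h` to be a random field evaluated at a random point. -/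
lemma lintegral_freeze {Ω α : Type*} {mΩ : MeasurableSpace Ω} {mα : MeasurableSpace α}
    {μ : Measure Ω} [IsProbabilityMeasure μ] {G₁ G₂ : MeasurableSpace Ω} (h₁ : G₁ ≤ mΩ)
    (h₂ : G₂ ≤ mΩ) (hind : Indep G₁ G₂ μ) {X : Ω → α} (hX : Measurable[G₁] X)
    {h : α × Ω → ENNReal} (hh : @Measurable _ _ (mα.prod G₂) _ h) :
    ∫⁻ ω, h (X ω, ω) ∂μ = ∫⁻ ω', ∫⁻ ω, h (X ω', ω) ∂μ ∂μ := by
  have hid : @Measurable Ω Ω mΩ G₂ id := fun s hs => h₂ s hs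
  refine @lintegral_indep Ω α Ω mΩ mα G₂ μ _ X id (fun s hs => h₁ _ (hX hs)) hid ?_ h hh
  rw [IndepFun_iff_Indep]
  refine indep_of_indep_of_le hind hX.comap_le ?_
  rw [MeasurableSpace.comap_id]

/-- Bienaymé's identity as an inequality in `[0, ∞]`, so that no integrability is needed: if a
summand with nonzero coefficient is not square integrable, the right-hand side is infinite. -/
lemma evariance_sum_le {Ω ι : Type*} {mΩ : MeasurableSpace Ω} {μ : Measure Ω}
    [IsProbabilityMeasure μ] (s : Finset ι) (c : ι → ℝ) (hc : ∀ k ∈ s, c k ≠ 0)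
    (Y : ι → Ω → ℝ) (hY : ∀ k, Measurable (Y k))
    (hind : ∀ j k, j ≠ k → IndepFun (Y j) (Y k) μ) :
    evariance (fun ω => ∑ k ∈ s, c k * Y k ω) μ
      ≤ ∑ k ∈ s, ENNReal.ofReal (c k ^ 2) * ∫⁻ ω, ‖Y k ω‖ₑ ^ 2 ∂μ := by
  by_cases hL : ∀ k ∈ s, MemLp (Y k) 2 μ
  · have hL' : ∀ k ∈ s, MemLp (fun ω => c k * Y k ω) 2 μ := fun k hk => (hL k hk).const_mul _
    have e : (fun ω => ∑ k ∈ s, c k * Y k ω) = ∑ k ∈ s, fun ω => c k * Y k ω := by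
      ext ω; simp
    have hsum : MemLp (∑ k ∈ s, fun ω => c k * Y k ω) 2 μ := memLp_finsetSum' _ hL'
    rw [e, ← ofReal_variance hsum, IndepFun.variance_sum hL', ENNReal.ofReal_sum_of_nonneg
      (fun _ _ => variance_nonneg _ _)]
    · refine Finset.sum_le_sum fun k hk => ?_
      rw [ofReal_variance (hL' k hk), evariance_mul, evariance_def' (hY k).aestronglyMeasurable]
      gcongr
      exact tsub_le_self
    · intro j _ k _ hjk
      exact (hind j k hjk).comp (measurable_const_mul (c j)) (measurable_const_mul (c k))
  · push Not at hL
    obtain ⟨k, hk, hkL⟩ := hL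
    have htop : ∫⁻ ω, ‖Y k ω‖ₑ ^ 2 ∂μ = ⊤ := by
      have h1 := evariance_eq_top (hY k).aestronglyMeasurable hkL
      rw [evariance_def' (hY k).aestronglyMeasurable] at h1
      exact top_le_iff.1 (h1 ▸ tsub_le_self)
    have h2 : ENNReal.ofReal (c k ^ 2) * ∫⁻ ω, ‖Y k ω‖ₑ ^ 2 ∂μ = ⊤ := by
      rw [htop]
      exact ENNReal.mul_top (by simpa using hc k hk)
    rw [ENNReal.sum_eq_top.2 ⟨k, hk, h2⟩]
    exact le_top

lemma sqrt_sum_sq_le {ι : Type*} (s : Finset ι) (b : ι → ENNReal) :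
    (∑ k ∈ s, b k ^ 2) ^ ((1 : ℝ) / 2) ≤ ∑ k ∈ s, b k := by
  have h : ∑ k ∈ s, b k ^ 2 ≤ (∑ k ∈ s, b k) ^ 2 :=
    Finset.sum_sq_le_sq_sum_of_nonneg fun _ _ => zero_le
  calc (∑ k ∈ s, b k ^ 2) ^ ((1 : ℝ) / 2) ≤ ((∑ k ∈ s, b k) ^ 2) ^ ((1 : ℝ) / 2) := by gcongr
    _ = ∑ k ∈ s, b k := by
      rw [← ENNReal.rpow_two, ← ENNReal.rpow_mul]
      norm_num

/-! ### The index tree and the setting -/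

/-- The strict descendants of the index `σ` in the tree `Θ` of finite integer sequences. -/
def desc (σ : List ℤ) : Set (List ℤ) := {κ | ∃ τ, τ ≠ [] ∧ κ = σ ++ τ}

/-- The indices in whose σ-algebras the `(l, i)`-th summand of `V_n^θ` lives: everything at or
below `(θ, l, i)` or `(θ, -l, i)`. -/
def block (θ : List ℤ) (k : Σ _ : ℕ, ℕ) : Set (List ℤ) :=
  {κ | ∃ (s : ℤ) (τ : List ℤ), s.natAbs = k.1 ∧ κ = θ ++ [s, (k.2 : ℤ) + 1] ++ τ}

/-- The σ-algebra generated by the `F κ` with `κ` in the index set `S`. -/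
@[reducible] def sig {Ω : Type*} (F : List ℤ → MeasurableSpace Ω) (S : Set (List ℤ)) : MeasurableSpace Ω :=
  ⨆ κ ∈ S, F κ

/-- The `(l, i)`-th summand (`k = (l, i - 1)`) of the recursion for `V_n^θ`. -/
noncomputable def summand {𝕏 Ω A : Type*} (f : 𝕏 → (A → ℝ) → ℝ) (X : List ℤ → 𝕏 → A → Ω → 𝕏)
    (V : ℕ → List ℤ → 𝕏 → A → Ω → ℝ) (θ : List ℤ) (k : Σ _ : ℕ, ℕ) (x : 𝕏) (a : A) (ω : Ω) : ℝ :=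
  f (X (θ ++ [(k.1 : ℤ), (k.2 : ℤ) + 1]) x a ω)
      (fun b => V k.1 (θ ++ [(k.1 : ℤ), (k.2 : ℤ) + 1])
        (X (θ ++ [(k.1 : ℤ), (k.2 : ℤ) + 1]) x a ω) b ω)
    - if k.1 = 0 then 0 else
      f (X (θ ++ [(k.1 : ℤ), (k.2 : ℤ) + 1]) x a ω)
        (fun b => V (k.1 - 1) (θ ++ [-(k.1 : ℤ), (k.2 : ℤ) + 1])
          (X (θ ++ [(k.1 : ℤ), (k.2 : ℤ) + 1]) x a ω) b ω)

/-- The index set of the double sum defining `V_n^θ`; the pair `(l, j)` stands for `(l, i)` with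
`i = j + 1`. -/
def idx (M n : ℕ) : Finset (Σ _ : ℕ, ℕ) :=
  (Finset.range n).sigma fun l => Finset.range (M ^ (n - l))

/-- The standing assumptions of the MLFP setting, without those on the fixed point `v`. -/
structure Setting {𝕏 Ω A : Type*} [mX : MeasurableSpace 𝕏] {mΩ : MeasurableSpace Ω}
    (μ : Measure Ω) (M : ℕ) (F : List ℤ → MeasurableSpace Ω) (f : 𝕏 → (A → ℝ) → ℝ)
    (X : List ℤ → 𝕏 → A → Ω → 𝕏) (V : ℕ → List ℤ → 𝕏 → A → Ω → ℝ) : Prop where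
  le : ∀ θ, F θ ≤ mΩ
  indep : iIndep F μ
  meas_f : Measurable fun p : 𝕏 × (A → ℝ) => f p.1 p.2
  meas_X : ∀ θ : List ℤ, @Measurable (𝕏 × Ω) (A → 𝕏) (mX.prod (F θ)) MeasurableSpace.pi
    fun p => fun a => X θ p.1 a p.2
  law_X : ∀ θ η : List ℤ, Measure.map (fun ω => fun p : 𝕏 × A => X θ p.1 p.2 ω) μ
    = Measure.map (fun ω => fun p : 𝕏 × A => X η p.1 p.2 ω) μ
  rec_V : ∀ (n : ℕ) (θ : List ℤ) (x : 𝕏) (a : A) (ω : Ω),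
    V n θ x a ω = ∑ k ∈ idx M n, ((M : ℝ) ^ (n - k.1))⁻¹ * summand f X V θ k x a ω

lemma sig_mono {Ω : Type*} {F : List ℤ → MeasurableSpace Ω} {s t : Set (List ℤ)} (h : s ⊆ t) : sig F s ≤ sig F t :=
  biSup_mono h

lemma le_sig {Ω : Type*} {F : List ℤ → MeasurableSpace Ω} {s : Set (List ℤ)} {κ : List ℤ} (h : κ ∈ s) : F κ ≤ sig F s :=
  le_iSup₂_of_le κ h le_rfl

lemma disjoint_block {θ : List ℤ} {j k : Σ _ : ℕ, ℕ} (h : j ≠ k) :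
    Disjoint (block θ j) (block θ k) := by
  rw [Set.disjoint_left]
  rintro κ ⟨s, τ, hs, rfl⟩ ⟨s', τ', hs', he⟩
  apply h
  simp only [List.append_assoc, List.append_cancel_left_eq, List.cons_append,
    List.cons.injEq] at he
  obtain ⟨l, i⟩ := j
  obtain ⟨l', i'⟩ := k
  simp only at hs hs' he
  obtain ⟨h1, h2, -⟩ := he
  have h3 : l = l' := by omega
  have h4 : i = i' := by omega
  subst h3 h4
  rfl

lemma block_subset_desc (θ : List ℤ) (k : Σ _ : ℕ, ℕ) : block θ k ⊆ desc θ := by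
  rintro κ ⟨s, τ, -, rfl⟩
  exact ⟨[s, (k.2 : ℤ) + 1] ++ τ, by simp, by simp⟩

lemma desc_subset_block (θ : List ℤ) (k : Σ _ : ℕ, ℕ) {s : ℤ}
    (hs : s.natAbs = k.1) : desc (θ ++ [s, (k.2 : ℤ) + 1]) ⊆ block θ k := by
  rintro κ ⟨τ, -, rfl⟩
  exact ⟨s, τ, hs, rfl⟩

lemma mem_block (θ : List ℤ) (k : Σ _ : ℕ, ℕ) :
    θ ++ [(k.1 : ℤ), (k.2 : ℤ) + 1] ∈ block θ k :=
  ⟨k.1, [], by simp, by simp⟩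

lemma not_mem_desc {θ : List ℤ} {s t i : ℤ} : θ ++ [s, i] ∉ desc (θ ++ [t, i]) := by
  rintro ⟨τ, hτ, he⟩
  apply hτ
  simpa using congrArg List.length he

lemma disjoint_desc {θ : List ℤ} {l : ℕ} (hl : l ≠ 0) (i : ℤ) :
    Disjoint (desc (θ ++ [(l : ℤ), i])) (desc (θ ++ [-(l : ℤ), i])) := by
  rw [Set.disjoint_left]
  rintro κ ⟨τ, -, rfl⟩ ⟨τ', -, he⟩
  simp only [List.append_assoc, List.append_cancel_left_eq, List.cons_append,
    List.cons.injEq] at he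
  omega

lemma measurable_prod_mono {Ω α β : Type*} {mα : MeasurableSpace α}
    {mβ : MeasurableSpace β} {G₁ G₂ : MeasurableSpace Ω} (h : G₁ ≤ G₂) {g : α × Ω → β}
    (hg : @Measurable _ _ (mα.prod G₁) _ g) : @Measurable _ _ (mα.prod G₂) _ g :=
  hg.mono (sup_le_sup le_rfl (MeasurableSpace.comap_mono h)) le_rfl

/-- Evaluating a jointly measurable random field at a measurable random point. -/
lemma measurable_eval {Ω α β γ : Type*} {mα : MeasurableSpace α}
    {mβ : MeasurableSpace β} {mγ : MeasurableSpace γ} {G : MeasurableSpace Ω}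
    {W : α × Ω → β} (hW : @Measurable _ _ (mα.prod G) _ W) {Z : γ × Ω → α}
    (hZ : @Measurable _ _ (mγ.prod G) _ Z) :
    @Measurable _ _ (mγ.prod G) _ fun p => W (Z p, p.2) := by
  let _ := G
  exact hW.comp (hZ.prodMk measurable_snd)

/-- From joint measurability of a random field to measurability as a map into the space of all
fields `𝕏 × A → β` with its product σ-algebra. -/
lemma measurable_field {𝕏 Ω A β : Type*} {mX : MeasurableSpace 𝕏} {mβ : MeasurableSpace β} {G : MeasurableSpace Ω}
    {W : 𝕏 → A → Ω → β} (hW : @Measurable (𝕏 × Ω) (A → β) (mX.prod G) _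
      fun p => fun a => W p.1 a p.2) :
    Measurable[G] fun ω => fun p : 𝕏 × A => W p.1 p.2 ω := by
  let _ := G
  exact measurable_pi_lambda _ fun p =>
    (measurable_pi_apply p.2).comp (hW.comp (measurable_prodMk_left (x := p.1)))


namespace Setting

variable {𝕏 Ω A : Type*} [mX : MeasurableSpace 𝕏] {mΩ : MeasurableSpace Ω}
  {μ : Measure Ω} {M : ℕ} {F : List ℤ → MeasurableSpace Ω} {f : 𝕏 → (A → ℝ) → ℝ}
  {X : List ℤ → 𝕏 → A → Ω → 𝕏} {V : ℕ → List ℤ → 𝕏 → A → Ω → ℝ}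

lemma sig_le (S : Setting μ M F f X V) (s : Set (List ℤ)) : sig F s ≤ mΩ :=
  iSup₂_le fun κ _ => S.le κ

lemma indep_sig (S : Setting μ M F f X V) {s t : Set (List ℤ)} (h : Disjoint s t) :
    Indep (sig F s) (sig F t) μ :=
  indep_iSup_of_disjoint S.le S.indep h

lemma V_zero (S : Setting μ M F f X V) (θ : List ℤ) (x : 𝕏) (a : A) (ω : Ω) :
    V 0 θ x a ω = 0 := by
  rw [S.rec_V]
  simp [idx, Finset.sum_sigma]

/-- Induction step for `measurable_V`: if the approximations in a summand depend only on
descendants of their own indices, then the summand depends only on its block. -/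
lemma measurable_summand_aux (S : Setting μ M F f X V) {θ : List ℤ} {k : Σ _ : ℕ, ℕ}
    (h₁ : @Measurable (𝕏 × Ω) (A → ℝ) (mX.prod (sig F (desc (θ ++ [(k.1 : ℤ), (k.2 : ℤ) + 1])))) _
      fun p => fun a => V k.1 (θ ++ [(k.1 : ℤ), (k.2 : ℤ) + 1]) p.1 a p.2)
    (h₂ : k.1 ≠ 0 → @Measurable (𝕏 × Ω) (A → ℝ)
      (mX.prod (sig F (desc (θ ++ [-(k.1 : ℤ), (k.2 : ℤ) + 1])))) _
      fun p => fun a => V (k.1 - 1) (θ ++ [-(k.1 : ℤ), (k.2 : ℤ) + 1]) p.1 a p.2) :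
    @Measurable (𝕏 × Ω) (A → ℝ) (mX.prod (sig F (block θ k))) _
      fun p => fun a => summand f X V θ k p.1 a p.2 := by
  have hX : ∀ a, @Measurable (𝕏 × Ω) 𝕏 (mX.prod (sig F (block θ k))) _
      fun p => X (θ ++ [(k.1 : ℤ), (k.2 : ℤ) + 1]) p.1 a p.2 := fun a =>
    (measurable_pi_apply a).comp (measurable_prod_mono (le_sig (mem_block θ k)) (S.meas_X _))
  have h₁' := measurable_prod_mono
    (sig_mono (F := F) (desc_subset_block θ k (s := k.1) (by simp))) h₁
  have key : ∀ (W : 𝕏 × Ω → A → ℝ) (a : A), @Measurable _ _ (mX.prod (sig F (block θ k))) _ W →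
      @Measurable _ _ (mX.prod (sig F (block θ k))) _ fun p =>
        f (X (θ ++ [(k.1 : ℤ), (k.2 : ℤ) + 1]) p.1 a p.2)
          (W (X (θ ++ [(k.1 : ℤ), (k.2 : ℤ) + 1]) p.1 a p.2, p.2)) := by
    intro W a hW
    let _ := sig F (block θ k)
    exact S.meas_f.comp ((hX a).prodMk (measurable_eval hW (hX a)))
  let _ := sig F (block θ k)
  refine measurable_pi_lambda _ fun a => ?_
  unfold summand
  by_cases h0 : k.1 = 0
  · simp only [if_pos h0, sub_zero]
    exact key _ a h₁'
  · simp only [if_neg h0]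
    have h₂' := measurable_prod_mono
      (sig_mono (F := F) (desc_subset_block θ k (s := -k.1) (by simp))) (h₂ h0)
    exact (key _ a h₁').sub (key _ a h₂')

/-- `V_n^θ` only depends on the noise attached to strict descendants of `θ`. -/
lemma measurable_V (S : Setting μ M F f X V) (n : ℕ) : ∀ θ : List ℤ,
    @Measurable (𝕏 × Ω) (A → ℝ) (mX.prod (sig F (desc θ))) _
      fun p => fun a => V n θ p.1 a p.2 := by
  induction n using Nat.strong_induction_on with
  | _ n ih =>
  intro θ
  have e : (fun p : 𝕏 × Ω => fun a => V n θ p.1 a p.2) = fun p => fun a =>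
      ∑ k ∈ idx M n, ((M : ℝ) ^ (n - k.1))⁻¹ * summand f X V θ k p.1 a p.2 := by
    funext p a
    exact S.rec_V n θ p.1 a p.2
  rw [e]
  let _ := sig F (desc θ)
  refine measurable_pi_lambda _ fun a => Finset.measurable_sum _ fun k hk => ?_
  have hk' : k.1 < n := by
    simp only [idx, Finset.mem_sigma, Finset.mem_range] at hk
    exact hk.1
  exact ((measurable_pi_apply a).comp (measurable_prod_mono (sig_mono (block_subset_desc θ k))
    (S.measurable_summand_aux (ih _ hk' _) (fun _ => ih _ (by omega) _)))).const_mul _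

lemma measurable_summand (S : Setting μ M F f X V) (θ : List ℤ) (k : Σ _ : ℕ, ℕ) :
    @Measurable (𝕏 × Ω) (A → ℝ) (mX.prod (sig F (block θ k))) _
      fun p => fun a => summand f X V θ k p.1 a p.2 :=
  S.measurable_summand_aux (S.measurable_V _ _) fun _ => S.measurable_V _ _

/-! ### Laws of the approximations -/

/-- Laws of pairs of independent random variables are determined by the marginal laws. -/
lemma _root_.MLFP.map_pair_eq {α β : Type*} [MeasurableSpace α] [MeasurableSpace β]
    [IsProbabilityMeasure μ] {U U' : Ω → α} {W W' : Ω → β} (hU : Measurable U)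
    (hU' : Measurable U') (hW : Measurable W) (hW' : Measurable W') (h : IndepFun U W μ)
    (h' : IndepFun U' W' μ) (eU : μ.map U = μ.map U') (eW : μ.map W = μ.map W') :
    μ.map (fun ω => (U ω, W ω)) = μ.map (fun ω => (U' ω, W' ω)) := by
  rw [(indepFun_iff_map_prod_eq_prod_map_map hU.aemeasurable hW.aemeasurable).1 h,
    (indepFun_iff_map_prod_eq_prod_map_map hU'.aemeasurable hW'.aemeasurable).1 h', eU, eW]

/-- A random field `W` on `𝕏 × A`, as a random element of the space of all functions. -/
def field {β : Type*} (W : 𝕏 → A → Ω → β) (ω : Ω) : 𝕏 × A → β := fun p => W p.1 p.2 ω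

lemma indepFun_of_disjoint (S : Setting μ M F f X V) {α β : Type*} {mα : MeasurableSpace α}
    {mβ : MeasurableSpace β} {s t : Set (List ℤ)} (h : Disjoint s t) {U : Ω → α} {W : Ω → β}
    (hU : Measurable[sig F s] U) (hW : Measurable[sig F t] W) : IndepFun U W μ := by
  rw [IndepFun_iff_Indep]
  exact indep_of_indep_of_le (S.indep_sig h) hU.comap_le hW.comap_le

lemma field_V (S : Setting μ M F f X V) (n : ℕ) (θ : List ℤ) :
    Measurable[sig F (desc θ)] (field (V n θ)) :=
  measurable_field (S.measurable_V n θ)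

lemma field_X (S : Setting μ M F f X V) (θ : List ℤ) : Measurable[F θ] (field (X θ)) :=
  measurable_field (S.meas_X θ)

/-- The pair of approximations entering one summand has a law independent of the index. -/
lemma law_pair (S : Setting μ M F f X V) [IsProbabilityMeasure μ] {l : ℕ}
    (h₁ : ∀ θ η, μ.map (field (V l θ)) = μ.map (field (V l η)))
    (h₂ : ∀ θ η, μ.map (field (V (l - 1) θ)) = μ.map (field (V (l - 1) η)))
    (i : ℤ) (θ η : List ℤ) :
    μ.map (fun ω => (field (V l (θ ++ [(l : ℤ), i])) ω,
        field (V (l - 1) (θ ++ [-(l : ℤ), i])) ω))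
      = μ.map (fun ω => (field (V l (η ++ [(l : ℤ), i])) ω,
        field (V (l - 1) (η ++ [-(l : ℤ), i])) ω)) := by
  rcases eq_or_ne l 0 with rfl | hl
  -- At level `0` both fields vanish, so independence (which could fail here) is not needed.
  · have h0 : ∀ κ ω, field (V 0 κ) ω = 0 := fun κ ω => funext fun p => S.V_zero κ p.1 p.2 ω
    simp [h0]
  · have hm : ∀ n κ, Measurable (field (V n κ)) := fun n κ =>
      (S.field_V n κ).mono (S.sig_le _) le_rfl
    exact map_pair_eq (hm _ _) (hm _ _) (hm _ _) (hm _ _)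
      (S.indepFun_of_disjoint (disjoint_desc hl i) (S.field_V _ _) (S.field_V _ _))
      (S.indepFun_of_disjoint (disjoint_desc hl i) (S.field_V _ _) (S.field_V _ _))
      (h₁ _ _) (h₂ _ _)

lemma lintegral_field_X (S : Setting μ M F f X V) {k : (𝕏 × A → 𝕏) → ENNReal}
    (hk : Measurable k) (θ η : List ℤ) :
    ∫⁻ ω, k (field (X θ) ω) ∂μ = ∫⁻ ω, k (field (X η) ω) ∂μ := by
  have hm : ∀ κ, Measurable (field (X κ)) := fun κ => (S.field_X κ).mono (S.le κ) le_rfl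
  rw [← lintegral_map hk (hm θ), ← lintegral_map hk (hm η)]
  exact congrArg (fun ν => ∫⁻ z, k z ∂ν) (S.law_X θ η)

/-- The deterministic operation producing a field of summands from the sampled points `z` and
the two approximations `e.1`, `e.2`. It is measurable in `e` for fixed `z`, but not in `z`. -/
def glue (f : 𝕏 → (A → ℝ) → ℝ) (l : ℕ) (z : 𝕏 × A → 𝕏) (e : (𝕏 × A → ℝ) × (𝕏 × A → ℝ)) :
    𝕏 × A → ℝ := fun p =>
  f (z p) (fun b => e.1 (z p, b)) - if l = 0 then 0 else f (z p) (fun b => e.2 (z p, b))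

lemma measurable_glue (S : Setting μ M F f X V) (l : ℕ) (z : 𝕏 × A → 𝕏) :
    Measurable (glue f l z) := by
  refine measurable_pi_lambda _ fun p => ?_
  have h1 : Measurable fun e : (𝕏 × A → ℝ) × (𝕏 × A → ℝ) =>
      f (z p) (fun b => e.1 (z p, b)) :=
    S.meas_f.comp (measurable_const.prodMk
      (measurable_pi_lambda _ fun b => (measurable_pi_apply _).comp measurable_fst))
  have h2 : Measurable fun e : (𝕏 × A → ℝ) × (𝕏 × A → ℝ) =>
      f (z p) (fun b => e.2 (z p, b)) :=
    S.meas_f.comp (measurable_const.prodMk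
      (measurable_pi_lambda _ fun b => (measurable_pi_apply _).comp measurable_snd))
  unfold glue
  split_ifs
  · exact h1.sub measurable_const
  · exact h1.sub h2

/-- The frozen field of summands is jointly measurable in the sampled points and `ω`. -/
lemma measurable_glue_field (S : Setting μ M F f X V) (l : ℕ) {t : Set (List ℤ)}
    {κ κ' : List ℤ} (hκ : desc κ ⊆ t) (hκ' : desc κ' ⊆ t) :
    @Measurable _ _ ((MeasurableSpace.pi (X := fun _ : 𝕏 × A => 𝕏)).prod (sig F t)) _
      fun q : (𝕏 × A → 𝕏) × Ω => glue f l q.1 (field (V l κ) q.2, field (V (l - 1) κ') q.2) := by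
  have h1 := measurable_prod_mono (sig_mono (F := F) hκ) (S.measurable_V l κ)
  have h2 := measurable_prod_mono (sig_mono (F := F) hκ') (S.measurable_V (l - 1) κ')
  let _ := sig F t
  refine measurable_pi_lambda _ fun p => ?_
  have hz : Measurable fun q : (𝕏 × A → 𝕏) × Ω => q.1 p :=
    (measurable_pi_apply p).comp measurable_fst
  have g1 := S.meas_f.comp (hz.prodMk (measurable_eval h1 hz))
  have g2 := S.meas_f.comp (hz.prodMk (measurable_eval h2 hz))
  simp only [glue]
  split_ifs
  · exact g1.sub measurable_const
  · exact g1.sub g2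

/-- The field of summands has a law independent of the parent index: freeze the sampled points,
replace the approximations, then replace the law of the sampled points. -/
lemma law_summand (S : Setting μ M F f X V) [IsProbabilityMeasure μ] (k : Σ _ : ℕ, ℕ)
    (h₁ : ∀ θ η, μ.map (field (V k.1 θ)) = μ.map (field (V k.1 η)))
    (h₂ : ∀ θ η, μ.map (field (V (k.1 - 1) θ)) = μ.map (field (V (k.1 - 1) η)))
    (θ η : List ℤ) :
    μ.map (field (summand f X V θ k)) = μ.map (field (summand f X V η k)) := by
  have hm : ∀ κ, Measurable (field (summand f X V κ k)) := fun κ =>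
    (measurable_field (S.measurable_summand κ k)).mono (S.sig_le _) le_rfl
  have hV : ∀ n κ, Measurable (field (V n κ)) := fun n κ =>
    (S.field_V n κ).mono (S.sig_le _) le_rfl
  refine Measure.ext fun s hs => ?_
  have hg : Measurable (s.indicator (1 : (𝕏 × A → ℝ) → ENNReal)) :=
    measurable_one.indicator hs
  have step : ∀ κ : List ℤ, μ.map (field (summand f X V κ k)) s
      = ∫⁻ ω', ∫⁻ ω, s.indicator (1 : (𝕏 × A → ℝ) → ENNReal)
          (glue f k.1 (field (X (κ ++ [(k.1 : ℤ), (k.2 : ℤ) + 1])) ω')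
          (field (V k.1 (κ ++ [(k.1 : ℤ), (k.2 : ℤ) + 1])) ω,
            field (V (k.1 - 1) (κ ++ [-(k.1 : ℤ), (k.2 : ℤ) + 1])) ω)) ∂μ ∂μ := by
    intro κ
    rw [← lintegral_indicator_one hs, lintegral_map hg (hm κ)]
    refine lintegral_freeze (S.le (κ ++ [(k.1 : ℤ), (k.2 : ℤ) + 1]))
      (S.sig_le (desc (κ ++ [(k.1 : ℤ), (k.2 : ℤ) + 1])
        ∪ desc (κ ++ [-(k.1 : ℤ), (k.2 : ℤ) + 1]))) ?_ (S.field_X _)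
      (hg.comp (S.measurable_glue_field k.1 Set.subset_union_left Set.subset_union_right))
    refine indep_of_indep_of_le_left (S.indep_sig (s := {κ ++ [(k.1 : ℤ), (k.2 : ℤ) + 1]}) ?_)
      (le_sig (Set.mem_singleton _))
    rw [Set.disjoint_singleton_left]
    rintro (h | h)
    · exact not_mem_desc h
    · exact not_mem_desc h
  rw [step θ, step η]
  have inner : ∀ z : 𝕏 × A → 𝕏,
      ∫⁻ ω, s.indicator (1 : (𝕏 × A → ℝ) → ENNReal) (glue f k.1 z
          (field (V k.1 (θ ++ [(k.1 : ℤ), (k.2 : ℤ) + 1])) ω,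
            field (V (k.1 - 1) (θ ++ [-(k.1 : ℤ), (k.2 : ℤ) + 1])) ω)) ∂μ
      = ∫⁻ ω, s.indicator (1 : (𝕏 × A → ℝ) → ENNReal) (glue f k.1 z
          (field (V k.1 (η ++ [(k.1 : ℤ), (k.2 : ℤ) + 1])) ω,
            field (V (k.1 - 1) (η ++ [-(k.1 : ℤ), (k.2 : ℤ) + 1])) ω)) ∂μ := by
    intro z
    have hz := hg.comp (S.measurable_glue k.1 z)
    have e := congrArg (fun ν => ∫⁻ e, s.indicator (1 : (𝕏 × A → ℝ) → ENNReal)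
      (glue f k.1 z e) ∂ν) (S.law_pair h₁ h₂ ((k.2 : ℤ) + 1) θ η)
    exact (lintegral_map hz ((hV _ _).prodMk (hV _ _))).symm.trans
      (e.trans (lintegral_map hz ((hV _ _).prodMk (hV _ _))))
  simp_rw [inner]
  refine S.lintegral_field_X (k := fun z => ∫⁻ ω, s.indicator (1 : (𝕏 × A → ℝ) → ENNReal)
    (glue f k.1 z (field (V k.1 (η ++ [(k.1 : ℤ), (k.2 : ℤ) + 1])) ω,
            field (V (k.1 - 1) (η ++ [-(k.1 : ℤ), (k.2 : ℤ) + 1])) ω)) ∂μ) ?_ _ _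
  exact Measurable.lintegral_prod_right' (measurable_prod_mono (S.sig_le _)
    (hg.comp (S.measurable_glue_field k.1 (Set.subset_union_left)
      (Set.subset_union_right))))

/-- The law of the whole random field `V_n^θ` does not depend on `θ`. -/
lemma law_V (S : Setting μ M F f X V) [IsProbabilityMeasure μ] (n : ℕ) : ∀ θ η,
    μ.map (field (V n θ)) = μ.map (field (V n η)) := by
  induction n using Nat.strong_induction_on with
  | _ n ih =>
  intro θ η
  let P : List ℤ → Finset (Σ _ : ℕ, ℕ) → Ω → 𝕏 × A → ℝ := fun κ s ω p =>
    ∑ k ∈ s, ((M : ℝ) ^ (n - k.1))⁻¹ * field (summand f X V κ k) ω p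
  have hY : ∀ κ k, Measurable[sig F (block κ k)] (field (summand f X V κ k)) := fun κ k =>
    measurable_field (S.measurable_summand κ k)
  have hP : ∀ κ s, Measurable[sig F (⋃ k ∈ s, block κ k)] (P κ s) := by
    intro κ s
    let _ := sig F (⋃ k ∈ s, block κ k)
    refine measurable_pi_lambda _ fun p => Finset.measurable_sum _ fun k hk => ?_
    exact ((measurable_pi_apply p).comp ((hY κ k).mono
      (sig_mono (Set.subset_biUnion_of_mem (u := fun k => block κ k) hk)) le_rfl)).const_mul _
  have hP' : ∀ κ s, Measurable (P κ s) := fun κ s => (hP κ s).mono (S.sig_le _) le_rfl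
  have hY' : ∀ κ k, Measurable (field (summand f X V κ k)) := fun κ k =>
    (hY κ k).mono (S.sig_le _) le_rfl
  have key : ∀ s : Finset (Σ _ : ℕ, ℕ), (∀ k ∈ s, k.1 < n) → μ.map (P θ s) = μ.map (P η s) := by
    intro s
    induction s using Finset.induction_on with
    | empty => intro _; simp [P]
    | insert k s hks ihs =>
      intro hs
      have hind : ∀ κ, IndepFun (P κ s) (field (summand f X V κ k)) μ := by
        intro κ
        refine S.indepFun_of_disjoint ?_ (hP κ s) (hY κ k)
        simp only [Set.disjoint_iUnion_left]
        intro j hj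
        exact disjoint_block (by rintro rfl; exact hks hj)
      have hk := hs k (Finset.mem_insert_self _ _)
      have e := map_pair_eq (hP' θ s) (hP' η s) (hY' θ k) (hY' η k) (hind θ) (hind η)
        (ihs fun j hj => hs j (Finset.mem_insert_of_mem hj))
        (S.law_summand k (ih _ hk) (ih _ (by omega)) θ η)
      let Φ : (𝕏 × A → ℝ) × (𝕏 × A → ℝ) → 𝕏 × A → ℝ := fun e p =>
        ((M : ℝ) ^ (n - k.1))⁻¹ * e.2 p + e.1 p
      have hΦ : Measurable Φ := by
        refine measurable_pi_lambda _ fun p => ?_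
        exact (((measurable_pi_apply p).comp measurable_snd).const_mul _).add
          ((measurable_pi_apply p).comp measurable_fst)
      have hins : ∀ κ, P κ (insert k s) = Φ ∘ fun ω => (P κ s ω, field (summand f X V κ k) ω) := by
        intro κ
        funext ω p
        simp [P, Φ, Finset.sum_insert hks]
      rw [hins θ, hins η, ← Measure.map_map hΦ ((hP' _ _).prodMk (hY' _ _)),
        ← Measure.map_map hΦ ((hP' _ _).prodMk (hY' _ _)), e]
  have hVP : ∀ κ, field (V n κ) = P κ (idx M n) := by
    intro κ
    funext ω p
    exact S.rec_V n κ p.1 p.2 ω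
  rw [hVP θ, hVP η]
  refine key _ fun k hk => ?_
  simp only [idx, Finset.mem_sigma, Finset.mem_range] at hk
  exact hk.1

/-- Functionals of a sampled point and an approximation evaluated there do not depend on the
indices involved, as long as the approximation does not use the noise of the sampled point. -/
lemma lintegral_eval (S : Setting μ M F f X V) [IsProbabilityMeasure μ] (l : ℕ)
    {θ η θ' η' : List ℤ} (h : θ ∉ desc η) (h' : θ' ∉ desc η') {g : 𝕏 × (A → ℝ) → ENNReal}
    (hg : Measurable g) (x : 𝕏) (a : A) :
    ∫⁻ ω, g (X θ x a ω, fun b => V l η (X θ x a ω) b ω) ∂μ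
      = ∫⁻ ω, g (X θ' x a ω, fun b => V l η' (X θ' x a ω) b ω) ∂μ := by
  have hgV : ∀ κ, @Measurable _ _ (mX.prod (sig F (desc κ))) _
      fun q : 𝕏 × Ω => g (q.1, fun b => V l κ q.1 b q.2) := by
    intro κ
    have h1 := S.measurable_V l κ
    let _ := sig F (desc κ)
    exact hg.comp (measurable_fst.prodMk h1)
  have step : ∀ κ κ' : List ℤ, κ ∉ desc κ' →
      ∫⁻ ω, g (X κ x a ω, fun b => V l κ' (X κ x a ω) b ω) ∂μ
        = ∫⁻ ω', ∫⁻ ω, g (X κ x a ω', fun b => V l κ' (X κ x a ω') b ω) ∂μ ∂μ := by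
    intro κ κ' hκ
    refine lintegral_freeze (S.le κ) (S.sig_le (desc κ')) ?_
      ((measurable_pi_apply (x, a)).comp (S.field_X κ)) (hgV κ')
    exact indep_of_indep_of_le_left
      (S.indep_sig (s := {κ}) (Set.disjoint_singleton_left.2 hκ)) (le_sig (Set.mem_singleton _))
  rw [step _ _ h, step _ _ h']
  have hV : ∀ κ, Measurable (field (V l κ)) := fun κ =>
    (S.field_V l κ).mono (S.sig_le _) le_rfl
  have inner : ∀ y : 𝕏, ∫⁻ ω, g (y, fun b => V l η y b ω) ∂μ
      = ∫⁻ ω, g (y, fun b => V l η' y b ω) ∂μ := by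
    intro y
    have hy : Measurable fun e : 𝕏 × A → ℝ => g (y, fun b => e (y, b)) :=
      hg.comp (measurable_const.prodMk (measurable_pi_lambda _ fun b => measurable_pi_apply _))
    have e := congrArg (fun ν => ∫⁻ e, g (y, fun b => e (y, b)) ∂ν) (S.law_V l η η')
    rw [lintegral_map hy (hV _), lintegral_map hy (hV _)] at e
    exact e
  simp_rw [inner]
  have hk : Measurable fun y : 𝕏 => ∫⁻ ω, g (y, fun b => V l η' y b ω) ∂μ :=
    Measurable.lintegral_prod_right' (measurable_prod_mono (S.sig_le _) (hgV η'))
  exact S.lintegral_field_X (hk.comp (measurable_pi_apply (x, a))) θ θ'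

/-! ### Second moments of the summands and the variance bound -/

/-- The root mean square distance between `V_l^0` and `v` at the sampled point `X^{0,x,a}`. -/
noncomputable def err (μ : Measure Ω) (X : List ℤ → 𝕏 → A → Ω → 𝕏)
    (V : ℕ → List ℤ → 𝕏 → A → Ω → ℝ) (v : 𝕏 → A → ℝ) (x : 𝕏) (a : A) (l : ℕ) : ENNReal :=
  (∫⁻ ω, ENNReal.ofReal
    ((⨆ b : A, |V l ([0]) (X ([0]) x a ω) b ω - v (X ([0]) x a ω) b|) ^ 2) ∂μ) ^ ((1 : ℝ) / 2)

lemma measurable_dist [Fintype A] {v : 𝕏 → A → ℝ} (hv : Measurable v) :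
    Measurable fun q : 𝕏 × (A → ℝ) => ⨆ b : A, |q.2 b - v q.1 b| := by
  refine Measurable.iSup fun b => ?_
  have h1 : Measurable fun q : 𝕏 × (A → ℝ) => q.2 b - v q.1 b :=
    ((measurable_pi_apply b).comp measurable_snd).sub
      ((measurable_pi_apply b).comp (hv.comp measurable_fst))
  exact h1.abs

/-- The root mean square distance between `V_l^η` and `v` at `X^{θ,x,a}` is the same for all
admissible pairs of indices. -/
lemma lintegral_dist (S : Setting μ M F f X V) [IsProbabilityMeasure μ] [Fintype A]
    {v : 𝕏 → A → ℝ} (hv : Measurable v) (l : ℕ) {θ η : List ℤ} (h : θ ∉ desc η) (x : 𝕏) (a : A) :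
    (∫⁻ ω, ENNReal.ofReal (⨆ b : A, |V l η (X θ x a ω) b ω - v (X θ x a ω) b|) ^ (2 : ℝ) ∂μ)
      ^ ((1 : ℝ) / 2) = err μ X V v x a l := by
  have hg : Measurable fun q : 𝕏 × (A → ℝ) =>
      ENNReal.ofReal ((⨆ b : A, |q.2 b - v q.1 b|) ^ 2) :=
    ((measurable_dist hv).pow_const 2).ennreal_ofReal
  have h0 : ([0] : List ℤ) ∉ desc [0] := by
    rintro ⟨τ, hτ, he⟩
    exact hτ (by simpa using he)
  rw [err, ← S.lintegral_eval l h h0 hg x a]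
  congr 1
  refine lintegral_congr fun ω => ?_
  rw [ENNReal.rpow_two, ENNReal.ofReal_pow (Real.iSup_nonneg fun _ => abs_nonneg _)]

lemma lintegral_summand_zero (S : Setting μ M F f X V) [IsProbabilityMeasure μ] (θ : List ℤ)
    (i : ℕ) (x : 𝕏) (a : A) :
    ∫⁻ ω, ‖summand f X V θ ⟨0, i⟩ x a ω‖ₑ ^ 2 ∂μ
      = ∫⁻ ω, ENNReal.ofReal (|f (X ([0]) x a ω) 0| ^ 2) ∂μ := by
  have hg : Measurable fun z : 𝕏 × A → 𝕏 => ENNReal.ofReal (|f (z (x, a)) 0| ^ 2) := by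
    have : Measurable fun y : 𝕏 => f y 0 := S.meas_f.comp (measurable_id.prodMk measurable_const)
    exact ((this.comp (measurable_pi_apply (x, a))).abs.pow_const 2).ennreal_ofReal
  refine Eq.trans (lintegral_congr fun ω => ?_)
    (S.lintegral_field_X hg (θ ++ [((0 : ℕ) : ℤ), (i : ℤ) + 1]) [0])
  have e : (fun b => V 0 (θ ++ [((0 : ℕ) : ℤ), (i : ℤ) + 1])
      (X (θ ++ [((0 : ℕ) : ℤ), (i : ℤ) + 1]) x a ω) b ω) = (0 : A → ℝ) :=
    funext fun b => S.V_zero _ _ _ _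
  simp only [summand, if_true, sub_zero, e, field]
  rw [Real.enorm_eq_ofReal_abs, ENNReal.ofReal_pow (abs_nonneg _)]

/-- Lipschitz continuity and Minkowski's inequality, comparing both levels with `v`. -/
lemma rms_summand_le (S : Setting μ M F f X V) [IsProbabilityMeasure μ] [Fintype A]
    {L : ℝ} (hL : 0 ≤ L) {v : 𝕏 → A → ℝ} (hv : Measurable v)
    (hlip : ∀ (x : 𝕏) (r s : A → ℝ), |f x r - f x s| ≤ L * ⨆ b : A, |r b - s b|)
    (θ : List ℤ) (l i : ℕ) (x : 𝕏) (a : A) :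
    (∫⁻ ω, ‖summand f X V θ ⟨l + 1, i⟩ x a ω‖ₑ ^ 2 ∂μ) ^ ((1 : ℝ) / 2)
      ≤ ENNReal.ofReal L * (err μ X V v x a (l + 1) + err μ X V v x a l) := by
  set κ := θ ++ [((l + 1 : ℕ) : ℤ), (i : ℤ) + 1] with hκ
  set κ' := θ ++ [-((l + 1 : ℕ) : ℤ), (i : ℤ) + 1] with hκ'
  let D : ℕ → List ℤ → Ω → ENNReal := fun m η ω =>
    ENNReal.ofReal (⨆ b : A, |V m η (X κ x a ω) b ω - v (X κ x a ω) b|)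
  have hD : ∀ m η, Measurable (D m η) := by
    intro m η
    have hX : Measurable fun ω => X κ x a ω :=
      (measurable_pi_apply (x, a)).comp ((S.field_X κ).mono (S.le κ) le_rfl)
    have hVm : Measurable fun q : 𝕏 × Ω => fun b => V m η q.1 b q.2 :=
      measurable_prod_mono (S.sig_le _) (S.measurable_V m η)
    exact ((measurable_dist hv).comp
      (hX.prodMk (hVm.comp (hX.prodMk measurable_id)))).ennreal_ofReal
  have hpt : ∀ ω, ‖summand f X V θ ⟨l + 1, i⟩ x a ω‖ₑ
      ≤ ENNReal.ofReal L * (D (l + 1) κ ω + D l κ' ω) := by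
    intro ω
    have hbdd : ∀ r : A → ℝ, BddAbove (Set.range r) := fun r => (Set.finite_range r).bddAbove
    have h1 := hlip (X κ x a ω) (fun b => V (l + 1) κ (X κ x a ω) b ω)
      (fun b => V l κ' (X κ x a ω) b ω)
    have h2 : (⨆ b : A, |V (l + 1) κ (X κ x a ω) b ω - V l κ' (X κ x a ω) b ω|)
        ≤ (⨆ b : A, |V (l + 1) κ (X κ x a ω) b ω - v (X κ x a ω) b|)
          + ⨆ b : A, |V l κ' (X κ x a ω) b ω - v (X κ x a ω) b| := by
      refine Real.iSup_le (fun b => ?_) (add_nonneg (Real.iSup_nonneg fun _ => abs_nonneg _)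
        (Real.iSup_nonneg fun _ => abs_nonneg _))
      refine le_trans ?_ (add_le_add
        (le_ciSup (hbdd fun b => |V (l + 1) κ (X κ x a ω) b ω - v (X κ x a ω) b|) b)
        (le_ciSup (hbdd fun b => |V l κ' (X κ x a ω) b ω - v (X κ x a ω) b|) b))
      rw [abs_sub_comm (V l κ' (X κ x a ω) b ω)]
      exact abs_sub_le _ _ _
    rw [Real.enorm_eq_ofReal_abs, ← ENNReal.ofReal_add (Real.iSup_nonneg fun _ => abs_nonneg _)
      (Real.iSup_nonneg fun _ => abs_nonneg _), ← ENNReal.ofReal_mul hL]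
    refine ENNReal.ofReal_le_ofReal ?_
    simp only [summand, Nat.succ_ne_zero, if_false, Nat.add_sub_cancel]
    exact h1.trans (mul_le_mul_of_nonneg_left h2 hL)
  have hd : ∀ η, κ ∉ desc (θ ++ [η, (i : ℤ) + 1]) := fun η => not_mem_desc
  calc (∫⁻ ω, ‖summand f X V θ ⟨l + 1, i⟩ x a ω‖ₑ ^ 2 ∂μ) ^ ((1 : ℝ) / 2)
      ≤ (∫⁻ ω, (ENNReal.ofReal L) ^ (2 : ℝ) * (D (l + 1) κ ω + D l κ' ω) ^ (2 : ℝ) ∂μ)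
          ^ ((1 : ℝ) / 2) := by
        gcongr with ω
        rw [← ENNReal.mul_rpow_of_nonneg _ _ (by norm_num), ENNReal.rpow_two]
        gcongr
        exact hpt ω
    _ = ENNReal.ofReal L * (∫⁻ ω, (D (l + 1) κ ω + D l κ' ω) ^ (2 : ℝ) ∂μ) ^ ((1 : ℝ) / 2) := by
        rw [lintegral_const_mul' _ _ (by simp),
          ENNReal.mul_rpow_of_nonneg _ _ (by norm_num), ← ENNReal.rpow_mul]
        norm_num
    _ ≤ _ := by
        gcongr
        refine (ENNReal.lintegral_Lp_add_le (hD _ _).aemeasurable (hD _ _).aemeasurable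
          (by norm_num)).trans_eq ?_
        rw [← S.lintegral_dist hv (l + 1) (hd _) x a, ← S.lintegral_dist hv l (hd _) x a]

/-- The bound for the root mean square of the level-`l` summands. -/
noncomputable def bnd (μ : Measure Ω) (f : 𝕏 → (A → ℝ) → ℝ) (X : List ℤ → 𝕏 → A → Ω → 𝕏)
    (V : ℕ → List ℤ → 𝕏 → A → Ω → ℝ) (v : 𝕏 → A → ℝ) (L : ℝ) (x : 𝕏) (a : A) : ℕ → ENNReal
  | 0 => (∫⁻ ω, ENNReal.ofReal (|f (X ([0]) x a ω) 0| ^ 2) ∂μ) ^ ((1 : ℝ) / 2)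
  | l + 1 => ENNReal.ofReal L * (err μ X V v x a (l + 1) + err μ X V v x a l)

/-- Bienaymé over all summands: the `M^{n-l}` independent summands of level `l`, each weighted by
`M^{-(n-l)}`, contribute a factor `M^{-(n-l)}` to the variance. -/
lemma sqrt_evariance_le (S : Setting μ M F f X V) [IsProbabilityMeasure μ] [Fintype A]
    (hM : M ≠ 0) {L : ℝ} (hL : 0 ≤ L) {v : 𝕏 → A → ℝ} (hv : Measurable v)
    (hlip : ∀ (x : 𝕏) (r s : A → ℝ), |f x r - f x s| ≤ L * ⨆ b : A, |r b - s b|)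
    (n : ℕ) (θ : List ℤ) (x : 𝕏) (a : A) :
    (evariance (fun ω => V n θ x a ω) μ) ^ ((1 : ℝ) / 2)
      ≤ ∑ l ∈ Finset.range n,
          ENNReal.ofReal (Real.sqrt M)⁻¹ ^ (n - l) * bnd μ f X V v L x a l := by
  have hM' : (0 : ℝ) < M := by positivity
  have hm : ∀ k, Measurable[sig F (block θ k)] (fun ω => summand f X V θ k x a ω) := fun k =>
    (measurable_pi_apply (x, a)).comp (measurable_field (S.measurable_summand θ k))
  have h1 := evariance_sum_le (μ := μ) (idx M n) (fun k => ((M : ℝ) ^ (n - k.1))⁻¹)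
    (fun k _ => by positivity) (fun k ω => summand f X V θ k x a ω)
    (fun k => (hm k).mono (S.sig_le _) le_rfl)
    (fun j k hjk => S.indepFun_of_disjoint (disjoint_block hjk) (hm j) (hm k))
  have hb : ∀ k : Σ _ : ℕ, ℕ, ∫⁻ ω, ‖summand f X V θ k x a ω‖ₑ ^ 2 ∂μ
      ≤ bnd μ f X V v L x a k.1 ^ 2 := by
    rintro ⟨l, i⟩
    have hroot : ∀ t : ENNReal, (t ^ ((1 : ℝ) / 2)) ^ 2 = t := fun t => by
      rw [← ENNReal.rpow_two, ← ENNReal.rpow_mul]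
      norm_num
    rw [← hroot (∫⁻ ω, ‖summand f X V θ ⟨l, i⟩ x a ω‖ₑ ^ 2 ∂μ)]
    gcongr
    cases l with
    | zero => rw [S.lintegral_summand_zero]; rfl
    | succ l => exact S.rms_summand_le hL hv hlip θ l i x a
  have hq : ∀ j : ℕ, ((M ^ j : ℕ) : ENNReal) * ENNReal.ofReal ((((M : ℝ) ^ j)⁻¹) ^ 2)
      = (ENNReal.ofReal (Real.sqrt M)⁻¹ ^ j) ^ 2 := by
    intro j
    rw [← ENNReal.ofReal_natCast, ← ENNReal.ofReal_mul (by positivity),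
      ← ENNReal.ofReal_pow (by positivity), ← ENNReal.ofReal_pow (by positivity)]
    congr 1
    rw [← pow_mul, mul_comm j 2, pow_mul, inv_pow (Real.sqrt M) 2, Real.sq_sqrt hM'.le]
    push_cast
    simp only [inv_pow]
    field_simp
  have h2 : evariance (fun ω => V n θ x a ω) μ ≤ ∑ l ∈ Finset.range n,
      (ENNReal.ofReal (Real.sqrt M)⁻¹ ^ (n - l) * bnd μ f X V v L x a l) ^ 2 := by
    simp_rw [S.rec_V n θ x a]
    refine h1.trans ?_
    rw [idx, Finset.sum_sigma]
    refine Finset.sum_le_sum fun l _ => ?_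
    refine (Finset.sum_le_sum fun i _ => mul_le_mul_right (hb ⟨l, i⟩) _).trans_eq ?_
    simp only []
    rw [Finset.sum_const, Finset.card_range, nsmul_eq_mul, ← mul_assoc, hq, mul_pow]
  exact (ENNReal.rpow_le_rpow h2 (by norm_num)).trans (sqrt_sum_sq_le _ _)

end Setting

/-- Reordering of the final bound by the errors `e l`, with `q = M^{-1/2}` and `r = M^{1/2}`: every
intermediate error occurs at two adjacent levels, whence the factor `1 + r`. -/
lemma sum_telescope_aux (q r L : ENNReal) (hqr : r * q = 1) (e : ℕ → ENNReal) (m : ℕ) :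
    ∑ l ∈ Finset.range (m + 1), q ^ (m + 1 - l) * (L * (e (l + 1) + e l))
      = L * q * e (m + 1) + L * r * q ^ (m + 2) * e 0
        + ∑ l ∈ Finset.Icc 1 m, L * (1 + r) * q ^ (m + 2 - l) * e l := by
  have h1 : ∑ l ∈ Finset.Icc 1 m, L * (1 + r) * q ^ (m + 2 - l) * e l
      = ∑ l ∈ Finset.range m, (L * q ^ (m + 1 - l) * e (l + 1) + L * q ^ (m - l) * e (l + 1)) := by
    rw [← Finset.Ico_add_one_right_eq_Icc, Finset.sum_Ico_eq_sum_range]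
    refine Finset.sum_congr (by simp) fun l hl => ?_
    have hl' : l < m := by simpa using hl
    have e1 : m + 2 - (1 + l) = m + 1 - l := by omega
    have e2 : m + 1 - l = (m - l) + 1 := by omega
    have e3 : q ^ (m - l) = r * q ^ (m - l + 1) := by
      rw [pow_succ, mul_comm (q ^ _) q, ← mul_assoc, hqr, one_mul]
    rw [e1, e2, e3, add_comm 1 l]
    ring
  have h2 : L * r * q ^ (m + 2) * e 0 = L * q ^ (m + 1) * e 0 := by
    rw [pow_succ q (m + 1), show L * r * (q ^ (m + 1) * q) * e 0
      = L * (r * q) * q ^ (m + 1) * e 0 by ring, hqr, mul_one]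
  rw [h1, h2, Finset.sum_add_distrib]
  have h3 : ∀ l, q ^ (m + 1 - l) * (L * (e (l + 1) + e l))
      = L * q ^ (m + 1 - l) * e (l + 1) + L * q ^ (m + 1 - l) * e l := fun l => by ring
  simp_rw [h3]
  rw [Finset.sum_add_distrib, Finset.sum_range_succ, Finset.sum_range_succ' (fun l =>
    L * q ^ (m + 1 - l) * e l)]
  simp only [Nat.add_sub_add_right, Nat.sub_zero, Nat.add_sub_cancel_left, pow_one]
  ring

end MLFP

/-- Variance estimate for MLFP approximations (Lemma 3.7 of the paper).  In the MLFP setting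
with finite `A`, if `v` is a measurable solution of the fixed-point equation
`v(x)(a) = E[f(X^{0,x,a}, v(X^{0,x,a}))]` and the Lipschitz and moment bounds hold, then for
all `n ∈ ℕ`, `(x,a)` and `θ` the standard deviation of `V_n^θ(x)(a)` is bounded by
`M^{−n/2}(E[|f(X^{0,x,a},0)|²])^{1/2}
 + 1_{[2,∞)}(n) L M^{−1/2} (E[‖V_{n−1}^0(X^{0,x,a}) − v(X^{0,x,a})‖_∞²])^{1/2}
 + 1_{[2,∞)}(n) L M^{1/2} M^{−n/2} (E[‖v(X^{0,x,a})‖_∞²])^{1/2}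
 + Σ_{l=1}^{n−2} L(1+M^{1/2}) M^{−(n−l)/2} (E[‖V_l^0(X^{0,x,a}) − v(X^{0,x,a})‖_∞²])^{1/2}`. -/
theorem stmt10
    {𝕏 : Type*} [mX : MeasurableSpace 𝕏] [Nonempty 𝕏]
    {Ω : Type*} [mΩ : MeasurableSpace Ω] (μ : Measure Ω) [IsProbabilityMeasure μ]
    {A : Type*} [Fintype A] [Nonempty A]
    (M : ℕ)
    (F : List ℤ → MeasurableSpace Ω) (hFsub : ∀ θ, F θ ≤ mΩ)
    (hFindep : ProbabilityTheory.iIndep F μ)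
    (f : 𝕏 → (A → ℝ) → ℝ)
    (hf : Measurable fun p : 𝕏 × (A → ℝ) => f p.1 p.2)
    (X : List ℤ → 𝕏 → A → Ω → 𝕏)
    (hXmeas : ∀ θ : List ℤ,
      @Measurable (𝕏 × Ω) (A → 𝕏) (mX.prod (F θ)) MeasurableSpace.pi
        fun p => fun a => X θ p.1 a p.2)
    (hXid : ∀ θ η : List ℤ,
      Measure.map (fun ω => fun p : 𝕏 × A => X θ p.1 p.2 ω) μ
        = Measure.map (fun ω => fun p : 𝕏 × A => X η p.1 p.2 ω) μ)
    (V : ℕ → List ℤ → 𝕏 → A → Ω → ℝ)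
    (hV : ∀ (n : ℕ) (θ : List ℤ) (x : 𝕏) (a : A) (ω : Ω),
      V n θ x a ω =
        ∑ l ∈ Finset.range n, ((M : ℝ) ^ (n - l))⁻¹ *
          ∑ i ∈ Finset.range (M ^ (n - l)),
            (f (X (θ ++ [(l : ℤ), (i : ℤ) + 1]) x a ω)
                (fun b => V l (θ ++ [(l : ℤ), (i : ℤ) + 1])
                  (X (θ ++ [(l : ℤ), (i : ℤ) + 1]) x a ω) b ω)
              - if l = 0 then 0 else
                f (X (θ ++ [(l : ℤ), (i : ℤ) + 1]) x a ω)
                  (fun b => V (l - 1) (θ ++ [-(l : ℤ), (i : ℤ) + 1])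
                    (X (θ ++ [(l : ℤ), (i : ℤ) + 1]) x a ω) b ω)))
    (c L : ℝ) (hc : 0 ≤ c) (hL : 0 ≤ L)
    (w : 𝕏 → ℝ) (hw_pos : ∀ x, 0 < w x) (hw_meas : Measurable w)
    (v : 𝕏 → A → ℝ) (hv_meas : Measurable v)
    (hf_lip : ∀ (x : 𝕏) (r s : A → ℝ), |f x r - f x s| ≤ L * ⨆ b : A, |r b - s b|)
    (hmom : ∀ (x : 𝕏) (a : A),
      (∫⁻ ω, ENNReal.ofReal
          (|f (X ([0]) x a ω) 0| ^ 2 + (⨆ b : A, |v (X ([0]) x a ω) b|) ^ 2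
            + w (X ([0]) x a ω) ^ 2) ∂μ)
        ≤ ENNReal.ofReal ((c * w x) ^ 2))
    (hv_fix : ∀ x a, v x a = ∫ ω, f (X ([0]) x a ω) (v (X ([0]) x a ω)) ∂μ)
    :
    ∀ n : ℕ, 1 ≤ n → ∀ (x : 𝕏) (a : A) (θ : List ℤ),
      (ProbabilityTheory.evariance (fun ω => V n θ x a ω) μ) ^ ((1 : ℝ) / 2)
        ≤ ENNReal.ofReal ((Real.sqrt M)⁻¹ ^ n) *
              (∫⁻ ω, ENNReal.ofReal (|f (X ([0]) x a ω) 0| ^ 2) ∂μ) ^ ((1 : ℝ) / 2)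
          + ENNReal.ofReal ((if 2 ≤ n then (1 : ℝ) else 0) * L * (Real.sqrt M)⁻¹) *
              (∫⁻ ω, ENNReal.ofReal
                  ((⨆ b : A,
                    |V (n - 1) ([0]) (X ([0]) x a ω) b ω - v (X ([0]) x a ω) b|) ^ 2) ∂μ)
                ^ ((1 : ℝ) / 2)
          + ENNReal.ofReal
                ((if 2 ≤ n then (1 : ℝ) else 0) * L * Real.sqrt M * (Real.sqrt M)⁻¹ ^ n) *
              (∫⁻ ω, ENNReal.ofReal ((⨆ b : A, |v (X ([0]) x a ω) b|) ^ 2) ∂μ)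
                ^ ((1 : ℝ) / 2)
          + ∑ l ∈ Finset.Icc 1 (n - 2),
              ENNReal.ofReal (L * (1 + Real.sqrt M) * (Real.sqrt M)⁻¹ ^ (n - l)) *
                (∫⁻ ω, ENNReal.ofReal
                    ((⨆ b : A,
                      |V l ([0]) (X ([0]) x a ω) b ω - v (X ([0]) x a ω) b|) ^ 2) ∂μ)
                  ^ ((1 : ℝ) / 2) := by
  have S : MLFP.Setting μ M F f X V := by
    refine ⟨hFsub, hFindep, hf, hXmeas, hXid, fun n θ x a ω => ?_⟩
    rw [hV, MLFP.idx, Finset.sum_sigma]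
    simp_rw [Finset.mul_sum]
    rfl
  intro n hn x a θ
  rcases Nat.eq_zero_or_pos M with rfl | hM
  -- For `M = 0` all inner sums are empty, so `V n` vanishes for every `n`.
  · have h0 : (fun ω => V n θ x a ω) = fun _ => 0 := by
      funext ω
      rw [hV]
      refine Finset.sum_eq_zero fun l hl => ?_
      have : n - l ≠ 0 := by have := Finset.mem_range.1 hl; omega
      simp [this]
    rw [h0]
    simp [ProbabilityTheory.evariance]
  · have hM' : (0 : ℝ) < M := by positivity
    have hr : (0 : ℝ) ≤ Real.sqrt M := Real.sqrt_nonneg _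
    have hq : (0 : ℝ) ≤ (Real.sqrt M)⁻¹ := inv_nonneg.2 hr
    have hqr : ENNReal.ofReal (Real.sqrt M) * ENNReal.ofReal (Real.sqrt M)⁻¹ = 1 := by
      rw [← ENNReal.ofReal_mul hr, mul_inv_cancel₀ (Real.sqrt_pos.2 hM').ne', ENNReal.ofReal_one]
    refine (S.sqrt_evariance_le hM.ne' hL hv_meas hf_lip n θ x a).trans_eq ?_
    obtain ⟨m, rfl⟩ : ∃ m, n = m + 1 := ⟨n - 1, by omega⟩
    rw [Finset.sum_range_succ', add_comm]
    simp only [Nat.add_sub_add_right, Nat.sub_zero, MLFP.Setting.bnd]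
    rw [ENNReal.ofReal_pow hq]
    rcases m with _ | m
    · simp
    · have hv0 : (∫⁻ ω, ENNReal.ofReal ((⨆ b : A, |v (X ([0]) x a ω) b|) ^ 2) ∂μ)
          ^ ((1 : ℝ) / 2) = MLFP.Setting.err μ X V v x a 0 := by
        simp [MLFP.Setting.err, S.V_zero]
      rw [hv0, MLFP.sum_telescope_aux _ _ _ hqr]
      have h2 : 2 ≤ m + 1 + 1 := by omega
      simp only [if_pos h2, one_mul, Nat.add_sub_cancel, ← add_assoc]
      rw [ENNReal.ofReal_mul hL, ENNReal.ofReal_mul (by positivity), ENNReal.ofReal_mul hL,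
        ENNReal.ofReal_pow hq]
      have hc : ∀ l, ENNReal.ofReal (L * (1 + Real.sqrt M) * (Real.sqrt M)⁻¹ ^ (m + 1 + 1 - l))
          = ENNReal.ofReal L * (1 + ENNReal.ofReal (Real.sqrt M))
            * ENNReal.ofReal (Real.sqrt M)⁻¹ ^ (m + 2 - l) := by
        intro l
        rw [ENNReal.ofReal_mul (by positivity), ENNReal.ofReal_mul hL,
          ENNReal.ofReal_add zero_le_one hr, ENNReal.ofReal_one, ENNReal.ofReal_pow hq]
      simp only [hc]
      rfl
end

section
/- Let c_ω, L ∈ [0,∞) with c_ω L < 1, let A be a nonempty finite set, and let M ∈ ℕ satisfy M > (1 + c_ω L(2|A| − 1))² (1 − c_ω L)^{−2}. Then [c_ω L(1 + |A| M^{−1/2}) + M^{−1/2} + ((c_ω L(1 + |A| M^{−1/2}) + M^{−1/2})² + 4 c_ω L M^{−1/2}(|A| − 1))^{1/2}] / 2 < 1. -/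
/-!
Write `q = cω * L`, `a = |A|`, `s = M^(-1/2)`, `b = q (1 + a s) + s` and `d = q s (a - 1) ≥ 0`.
The rate is the larger root of `x² - b x - d`, so it lies below `1` as soon as the value of this
polynomial at `1` is positive, that is `b + d < 1` (and then also `b < 2`). Since
`b + d = q + s (1 + q (2 a - 1))`, this is the lower bound on `M` after taking square roots.
-/

/-- Let `c_ω, L ∈ [0,∞)` with `c_ω L < 1`, let `A` be a nonempty finite set, and let `M ∈ ℕ`
satisfy `M > (1 + c_ω L(2|A| − 1))² (1 − c_ω L)^{−2}`.  Then the MLFP convergence rate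
`[c_ω L(1 + |A| M^{−1/2}) + M^{−1/2}
  + ((c_ω L(1 + |A| M^{−1/2}) + M^{−1/2})² + 4 c_ω L M^{−1/2}(|A| − 1))^{1/2}] / 2`
is strictly smaller than `1`. -/
theorem stmt12 {A : Type*} [Fintype A] [Nonempty A]
    (cω L : ℝ) (hcω : 0 ≤ cω) (hL : 0 ≤ L) (hcωL : cω * L < 1)
    (M : ℕ)
    (hM : (1 + cω * L * (2 * (Fintype.card A : ℝ) - 1)) ^ 2 / (1 - cω * L) ^ 2 < (M : ℝ)) :
    (cω * L * (1 + (Fintype.card A : ℝ) * (Real.sqrt M)⁻¹) + (Real.sqrt M)⁻¹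
        + Real.sqrt ((cω * L * (1 + (Fintype.card A : ℝ) * (Real.sqrt M)⁻¹)
              + (Real.sqrt M)⁻¹) ^ 2
            + 4 * cω * L * (Real.sqrt M)⁻¹ * ((Fintype.card A : ℝ) - 1))) / 2 < 1 := by
  have ha : (1 : ℝ) ≤ (Fintype.card A : ℝ) := by
    exact_mod_cast Fintype.card_pos (α := A)
  have hq : 0 ≤ cω * L := mul_nonneg hcω hL
  rw [show 4 * cω * L = 4 * (cω * L) by ring]
  generalize (Fintype.card A : ℝ) = a at *
  generalize cω * L = q at *
  have h1q : 0 < 1 - q := by linarith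
  have hK : 0 < 1 + q * (2 * a - 1) := by
    have := mul_nonneg hq (show 0 ≤ 2 * a - 1 by linarith)
    linarith
  have hlt : (1 + q * (2 * a - 1)) / (1 - q) < Real.sqrt M := by
    apply Real.lt_sqrt_of_sq_lt
    rwa [div_pow]
  have hr : 0 < Real.sqrt M := (div_pos hK h1q).trans hlt
  have hs : 0 < (Real.sqrt M)⁻¹ := inv_pos.mpr hr
  have hKs : (1 + q * (2 * a - 1)) * (Real.sqrt M)⁻¹ < 1 - q := by
    rw [← div_eq_mul_inv, div_lt_iff₀ hr]
    rw [div_lt_iff₀ h1q] at hlt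
    linarith
  generalize (Real.sqrt M)⁻¹ = s at *
  have hd : 0 ≤ q * s * (a - 1) := mul_nonneg (mul_nonneg hq hs.le) (by linarith)
  have hbd : q * (1 + a * s) + s + q * s * (a - 1) < 1 := by linarith
  rw [show 4 * q * s * (a - 1) = 4 * (q * s * (a - 1)) by ring]
  generalize q * (1 + a * s) + s = b at *
  generalize q * s * (a - 1) = d at *
  have hsqrt : Real.sqrt (b ^ 2 + 4 * d) < 2 - b := by
    rw [Real.sqrt_lt' (by linarith)]
    linarith
  linarith
end

section
/- Let κ ∈ [1,∞), λ ∈ [0,∞), and let x₁ = (κ − (κ² + 4λ)^{1/2})/2 and x₂ = (κ + (κ² + 4λ)^{1/2})/2. Then x₁ ≤ 0 < x₂, |x₁| ≤ |x₂|, and for all n ∈ ℕ₀ it holds that (x₂^{n+1} − x₁^{n+1})/(x₂ − x₁) ≤ (3/2) x₂^n. -/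
/-!
With `|x₁| ≤ x₂` and `x₁ ≤ 0`, we have
`-x₁ ^ (n + 1) ≤ |x₁| ^ n * |x₁| ≤ x₂ ^ n * (-x₁)`, so the numerator is at most
`x₂ ^ n * (x₂ - x₁)`. The quotient is therefore bounded by `x₂ ^ n` itself, which is
stronger than the bound with constant `3 / 2`.
-/


/-- Let `κ ∈ [1,∞)`, `λ ∈ [0,∞)`, and let `x₁ = (κ − √(κ² + 4λ))/2`,
`x₂ = (κ + √(κ² + 4λ))/2` be the two real roots of `x² = κx + λ`.  Then `x₁ ≤ 0 < x₂`,
`|x₁| ≤ |x₂|`, and for all `n ∈ ℕ₀` it holds that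
`(x₂^{n+1} − x₁^{n+1})/(x₂ − x₁) ≤ (3/2) x₂^n`. -/
theorem stmt13 (κ lam : ℝ) (hκ : 1 ≤ κ) (hlam : 0 ≤ lam)
    (x₁ x₂ : ℝ)
    (hx₁ : x₁ = (κ - Real.sqrt (κ ^ 2 + 4 * lam)) / 2)
    (hx₂ : x₂ = (κ + Real.sqrt (κ ^ 2 + 4 * lam)) / 2) :
    x₁ ≤ 0 ∧ 0 < x₂ ∧ |x₁| ≤ |x₂| ∧
      ∀ n : ℕ, (x₂ ^ (n + 1) - x₁ ^ (n + 1)) / (x₂ - x₁) ≤ (3 / 2) * x₂ ^ n := by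
  have hs : κ ≤ Real.sqrt (κ ^ 2 + 4 * lam) := Real.le_sqrt_of_sq_le (by linarith)
  have h1 : x₁ ≤ 0 := by linarith
  have h2 : 0 < x₂ := by linarith
  have habs : |x₁| ≤ x₂ := by
    rw [abs_of_nonpos h1]
    linarith
  refine ⟨h1, h2, habs.trans (le_abs_self x₂), fun n => ?_⟩
  have hnum : -x₁ ^ (n + 1) ≤ x₂ ^ n * -x₁ :=
    calc -x₁ ^ (n + 1) ≤ |x₁ ^ (n + 1)| := neg_le_abs _
      _ = |x₁| ^ n * |x₁| := by rw [abs_pow, pow_succ]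
      _ ≤ x₂ ^ n * |x₁| := by gcongr
      _ = x₂ ^ n * -x₁ := by rw [abs_of_nonpos h1]
  have hpos : 0 < x₂ ^ n := pow_pos h2 n
  have hquot : (x₂ ^ (n + 1) - x₁ ^ (n + 1)) / (x₂ - x₁) ≤ x₂ ^ n := by
    rw [div_le_iff₀ (by linarith), pow_succ x₂]
    linarith
  linarith
end
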